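/- Let V be a finite-dimensional complex vector space with a nondegenerate Hermitian form ω, and let U be a k-dimensional subspace. The SU(V, ω)-orbit of U in the Grassmannian Gr(k, V) is open (in the manifold topology) if and only if the restriction ω|_U is nondegenerate. -/

import Mathlib

open Module Submodule

noncomputable section

variable {V : Type} [NormedAddCommGroup V] [NormedSpace ℂ V]

/-- A sesquilinear form is Hermitian. -/
def IsHermitianForm (ω : V →ₗ⋆[ℂ] V →ₗ[ℂ] ℂ) : Prop :=
  ∀ x y, ω x y = star (ω y x)

/-- Nondegeneracy of a sesquilinear form. -/
def IsNondeg (ω : V →ₗ⋆[ℂ] V →ₗ[ℂ] ℂ) : Prop :=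
  ∀ x, (∀ y, ω x y = 0) → x = 0

/-- The topology (the usual manifold topology) on the Grassmannian of `k`-dimensional
subspaces of `V`, obtained as the quotient topology from the space of injective
(continuous) linear maps `ℂᵏ → V`. -/
instance grassTopology (k : ℕ) : TopologicalSpace {U : Submodule ℂ V // finrank ℂ U = k} :=
  TopologicalSpace.coinduced
    (fun f : {f : (Fin k → ℂ) →L[ℂ] V // Function.Injective f} =>
      (⟨LinearMap.range (f.1 : (Fin k → ℂ) →ₗ[ℂ] V), by
          rw [LinearMap.finrank_range_of_inj f.2]
          simp⟩ : {U : Submodule ℂ V // finrank ℂ U = k}))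
    inferInstance

open Filter Topology in
/-- A polynomial map on a Banach algebra whose derivative at zero is `1 - N`, with `N ∘ N = 0`,
is open at zero. -/
lemma map_nhds_zero_chart {A : Type*} [NormedRing A] [NormedAlgebra ℝ A] [CompleteSpace A]
    (K N : A →L[ℝ] A) (P : A)
    (hK : ∀ X, K X + K X + (X - (1 - P) * X * P) = X - N X) (hN : ∀ X, N (N X) = 0) :
    map (fun X => (1 + K X) * (1 + K X) * (1 + (X - (1 - P) * X * P))) (𝓝 0) = 𝓝 1 := by
  have h1 : HasStrictFDerivAt (fun X => 1 + K X) K 0 := K.hasStrictFDerivAt.const_add 1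
  have hid : HasStrictFDerivAt (fun X : A => X) (ContinuousLinearMap.id ℝ A) 0 :=
    hasStrictFDerivAt_id 0
  have h2 := ((hid.sub ((hid.const_mul (1 - P)).mul_const' P)).const_add 1)
  have h3 := (h1.mul' h1).mul' h2
  have h4 := h3.map_nhds_eq_of_surj (LinearMap.range_eq_top.2 fun h => ⟨h + N h, by
    have := hK (h + N h)
    rw [map_add N, hN, add_zero, add_sub_cancel_right] at this
    simpa [-map_add, mul_assoc, add_comm] using this⟩)
  convert h4 using 2
  · rfl
  · simp

/-- Every linear functional is represented by a nondegenerate Hermitian form. -/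
lemma exists_eq_of_nondegenerate {V : Type*} [AddCommGroup V] [Module ℂ V] [FiniteDimensional ℂ V]
    (ω : V →ₗ⋆[ℂ] V →ₗ[ℂ] ℂ) (hherm : ∀ x y, ω x y = star (ω y x))
    (hnd : ∀ x, (∀ y, ω x y = 0) → x = 0) (l : V →ₗ[ℂ] ℂ) : ∃ x, ω x = l := by
  have h : (LinearMap.range ω).dualCoannihilator = ⊥ := by
    rw [eq_bot_iff]
    intro x hx
    rw [Submodule.mem_dualCoannihilator] at hx
    refine hnd x fun y => ?_
    rw [hherm, hx _ ⟨y, rfl⟩, star_zero]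
  have h2 := Subspace.dualCoannihilator_dualAnnihilator_eq (W := LinearMap.range ω)
  rw [h, Submodule.dualAnnihilator_bot] at h2
  exact LinearMap.mem_range.1 (h2 ▸ Submodule.mem_top)

/-- The adjoint with respect to a nondegenerate Hermitian form. -/
lemma exists_adjoint [FiniteDimensional ℂ V] (ω : V →ₗ⋆[ℂ] V →ₗ[ℂ] ℂ)
    (hherm : IsHermitianForm ω) (hnd : IsNondeg ω) :
    ∃ adj : (V →L[ℂ] V) →ₗ[ℝ] (V →L[ℂ] V), ∀ X x y, ω (adj X x) y = ω x (X y) := by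
  have heq : ∀ a b : V, (∀ y, ω a y = ω b y) → a = b := fun a b h =>
    sub_eq_zero.1 (hnd _ fun y => by simp [h y])
  choose e he using exists_eq_of_nondegenerate ω hherm hnd
  have he' : ∀ l y, ω (e l) y = l y := fun l y => by rw [he]
  refine ⟨{
    toFun := fun X => LinearMap.toContinuousLinearMap
      { toFun := fun x => e (ω x ∘ₗ (X : V →ₗ[ℂ] V))
        map_add' := fun a b => heq _ _ fun y => by simp [he']
        map_smul' := fun c a => heq _ _ fun y => by simp [he'] }
    map_add' := fun X Y => by
      ext x
      exact heq _ _ fun y => by simp [he']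
    map_smul' := fun c X => by
      ext x
      refine heq _ _ fun y => ?_
      calc _ = ω x ((c : ℂ) • X y) := he' (ω x ∘ₗ ((c • X : V →L[ℂ] V) : V →ₗ[ℂ] V)) y
        _ = ω ((c : ℂ) • e (ω x ∘ₗ (X : V →ₗ[ℂ] V))) y := by
          rw [map_smul, map_smulₛₗ ω, LinearMap.smul_apply, he', Complex.conj_ofReal]
          rfl }, fun X x y => by simp [he']⟩

/-- The orthogonal projection onto a nondegenerate subspace. -/
lemma exists_orthogonal_projection [FiniteDimensional ℂ V] (ω : V →ₗ⋆[ℂ] V →ₗ[ℂ] ℂ)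
    (hherm : IsHermitianForm ω) (W : Submodule ℂ V)
    (hW : ∀ x ∈ W, (∀ y ∈ W, ω x y = 0) → x = 0) :
    ∃ P : V →L[ℂ] V, (∀ x, P x ∈ W) ∧ (∀ x ∈ W, P x = x) ∧ ∀ x y, ω (P x) y = ω x (P y) := by
  have heq : ∀ a ∈ W, ∀ b ∈ W, (∀ y ∈ W, ω a y = ω b y) → a = b := fun a ha b hb h =>
    sub_eq_zero.1 (hW _ (W.sub_mem ha hb) fun y hy => by simp [h y hy])
  choose e he using exists_eq_of_nondegenerate (ω.domRestrict₁₂ W W)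
    (fun x y => hherm x y) (fun x h => Subtype.ext (hW x x.2 fun y hy => h ⟨y, hy⟩))
  have he' : ∀ l, ∀ y : W, ω (e l) y = l y := fun l y => by
    conv_rhs => rw [← he l]
    rfl
  have key : ∀ x, ∀ y ∈ W, ω (e (ω x ∘ₗ W.subtype)) y = ω x y := fun x y hy => by
    simpa using he' (ω x ∘ₗ W.subtype) ⟨y, hy⟩
  refine ⟨LinearMap.toContinuousLinearMap
    { toFun := fun x => (e (ω x ∘ₗ W.subtype) : V)
      map_add' := fun a b => heq _ (e _).2 _ (W.add_mem (e _).2 (e _).2) fun y hy => by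
        rw [key _ _ hy, map_add, map_add, LinearMap.add_apply, LinearMap.add_apply,
          key _ _ hy, key _ _ hy]
      map_smul' := fun c a => heq _ (e _).2 _ (W.smul_mem _ (e _).2) fun y hy => by
        rw [key _ _ hy]
        simp [key _ _ hy] }, fun x => (e _).2, fun x hx => ?_, fun x y => ?_⟩
  · exact heq _ (e _).2 _ hx fun y hy => key x y hy
  · change ω (e (ω x ∘ₗ W.subtype)) y = ω x (e (ω y ∘ₗ W.subtype))
    rw [hherm, ← key y _ (e _).2, ← hherm, key x _ (e _).2]

/-- The Gram matrix of a family of vectors. -/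
def gramMatrix {k : ℕ} (ω : V →ₗ⋆[ℂ] V →ₗ[ℂ] ℂ) (v : Fin k → V) : Matrix (Fin k) (Fin k) ℂ :=
  Matrix.of fun i j => ω (v i) (v j)

/-- A nondegenerate Hermitian form has families of vectors with nonsingular Gram matrix, of any
length up to the dimension. -/
lemma exists_gramMatrix_det_ne_zero [FiniteDimensional ℂ V] (ω : V →ₗ⋆[ℂ] V →ₗ[ℂ] ℂ)
    (hherm : IsHermitianForm ω) (hnd : IsNondeg ω) {k : ℕ} (hk : k ≤ finrank ℂ V) :
    ∃ v : Fin k → V, (gramMatrix ω v).det ≠ 0 := by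
  let b := Module.finBasis ℂ V
  have hM : (gramMatrix ω b).IsHermitian := by
    ext i j
    exact (hherm _ _).symm
  let u := hM.eigenvectorBasis
  let ψ : Fin (finrank ℂ V) → V := fun j => ∑ i, u j i • b i
  have hψ : ∀ i j, ω (b i) (ψ j) = hM.eigenvalues j * u j i := fun i j => by
    have := congrFun (hM.mulVec_eigenvectorBasis j) i
    calc ω (b i) (ψ j) = (gramMatrix ω b).mulVec (u j) i := by
          simp [ψ, Matrix.mulVec, dotProduct, gramMatrix, mul_comm]
      _ = _ := by simp [this, u]
  have hψψ : ∀ i j, ω (ψ i) (ψ j) = hM.eigenvalues j * inner ℂ (u i) (u j) := fun i j => by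
    conv_lhs => enter [1, 2]; simp only [ψ]
    simp [hψ, PiLp.inner_apply, Finset.mul_sum]
    exact Finset.sum_congr rfl fun _ _ => by ring
  have hne : ∀ j, hM.eigenvalues j ≠ 0 := fun j h0 => by
    have hz : ψ j = 0 := hnd _ fun y => by
      rw [← b.sum_repr y]
      simp only [map_sum, map_smul, hherm (ψ j) (b _), hψ, h0]
      simp
    have := Fintype.linearIndependent_iff.1 b.linearIndependent (fun i => u j i) hz
    exact u.orthonormal.ne_zero j (by ext i; simpa using this i)
  refine ⟨fun i => ψ (Fin.castLE hk i), ?_⟩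
  have : gramMatrix ω (fun i => ψ (Fin.castLE hk i)) =
      Matrix.diagonal fun i => (hM.eigenvalues (Fin.castLE hk i) : ℂ) := by
    ext i j
    simp only [gramMatrix, Matrix.of_apply, hψψ, Matrix.diagonal_apply,
      orthonormal_iff_ite.1 u.orthonormal]
    by_cases h : i = j <;> simp [h]
  rw [this, Matrix.det_diagonal]
  exact Finset.prod_ne_zero_iff.2 fun i _ => by exact_mod_cast hne _

/-- A linear map whose Gram matrix is nonsingular is injective with nondegenerate range. -/
lemma eq_zero_of_gramMatrix_det_ne_zero (ω : V →ₗ⋆[ℂ] V →ₗ[ℂ] ℂ) (hherm : IsHermitianForm ω)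
    {k : ℕ} (f : (Fin k → ℂ) →ₗ[ℂ] V)
    (hf : (gramMatrix ω fun i => f (Pi.single i 1)).det ≠ 0) (c : Fin k → ℂ)
    (hc : ∀ d, ω (f c) (f d) = 0) : c = 0 := by
  refine Matrix.eq_zero_of_mulVec_eq_zero hf (funext fun i => ?_)
  have h := hc (Pi.single i 1)
  rw [hherm, star_eq_zero, pi_eq_sum_univ' c] at h
  simpa [Matrix.mulVec, dotProduct, gramMatrix, mul_comm] using h

open Filter Topology Polynomial in
/-- Along a real line, the Gram determinant is nonzero arbitrarily close to any point as soon as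
it is nonzero at some point. -/
lemma frequently_gramMatrix_det_ne_zero {k : ℕ} (ω : V →ₗ⋆[ℂ] V →ₗ[ℂ] ℂ) (v w : Fin k → V)
    (h : (gramMatrix ω w).det ≠ 0) :
    ∃ᶠ s : ℝ in 𝓝 0, (gramMatrix ω (fun i => v i + (s : ℂ) • (w i - v i))).det ≠ 0 := by
  let M : Matrix (Fin k) (Fin k) ℂ[X] := Matrix.of fun i j =>
    C (ω (v i) (v j)) + X * C (ω (v i) (w j - v j) + ω (w i - v i) (v j)) +
      X * X * C (ω (w i - v i) (w j - v j))
  have hM : ∀ s : ℝ, (gramMatrix ω (fun i => v i + (s : ℂ) • (w i - v i))).det =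
      M.det.eval (s : ℂ) := fun s => by
    rw [← Polynomial.coe_evalRingHom, RingHom.map_det]
    congr 1
    ext i j
    simp only [gramMatrix, Matrix.of_apply, map_add, map_smulₛₗ, LinearMap.add_apply,
      LinearMap.smul_apply, smul_eq_mul, RingHom.mapMatrix_apply, Matrix.map_apply, M,
      coe_evalRingHom, eval_add, eval_mul, eval_C, eval_X, Complex.conj_ofReal, RingHom.id_apply]
    ring
  have h0 : M.det ≠ 0 := fun h0 => h <| by simpa [h0] using hM 1
  have hfin : {s : ℝ | M.det.eval (s : ℂ) = 0}.Finite :=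
    (M.det.rootSet_finite ℂ).preimage Complex.ofReal_injective.injOn |>.subset fun s hs => by
      simpa [mem_rootSet, h0] using hs
  have := mem_closure_iff_frequently.1 ((hfin.countable.dense_compl ℝ) 0)
  exact this.mono fun s hs => by rw [hM]; exact hs

/-- The Cayley transform of a skew operator anticommuting with an involution is a special
isometry. -/
lemma exists_cayley_isometry [FiniteDimensional ℂ V] (ω : V →ₗ⋆[ℂ] V →ₗ[ℂ] ℂ)
    (K s : V →L[ℂ] V) (hK : ∀ x y, ω (K x) y = -ω x (K y)) (hs : s * s = 1)
    (hsK : s * K = -(K * s)) (hm : IsUnit (1 - K)) (hp : IsUnit (1 + K)) :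
    ∃ φ : V ≃ₗ[ℂ] V, (∀ x y, ω (φ x) (φ y) = ω x y) ∧ LinearMap.det (φ : V →ₗ[ℂ] V) = 1 ∧
      ∀ x, φ ((1 - K) x) = (1 + K) x := by
  obtain ⟨u, hu⟩ := hm
  obtain ⟨w, hw⟩ := hp
  let em := (ContinuousLinearEquiv.ofUnit u).toLinearEquiv
  let ep := (ContinuousLinearEquiv.ofUnit w).toLinearEquiv
  have hem : ∀ x, em x = (1 - K) x := fun x => by rw [← hu]; rfl
  have hep : ∀ x, ep x = (1 + K) x := fun x => by rw [← hw]; rfl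
  have hss : ∀ x, s (s x) = x := fun x => DFunLike.congr_fun hs x
  have hsK' : ∀ x, s (K x) = -K (s x) := fun x => DFunLike.congr_fun hsK x
  refine ⟨em.symm.trans ep, fun x y => ?_, ?_, fun x => ?_⟩
  · obtain ⟨x, rfl⟩ := em.surjective x
    obtain ⟨y, rfl⟩ := em.surjective y
    rw [LinearEquiv.trans_apply, LinearEquiv.trans_apply, em.symm_apply_apply,
      em.symm_apply_apply, hem, hem, hep, hep]
    simp [hK]
    ring
  · let e : V ≃ₗ[ℂ] V := LinearEquiv.ofInvolutive (s : V →ₗ[ℂ] V) hss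
    have hconj : (e : V →ₗ[ℂ] V) ∘ₗ (em : V →ₗ[ℂ] V) ∘ₗ (e.symm : V →ₗ[ℂ] V) = ep := by
      ext x
      have h1 : e.symm x = s x := rfl
      have h2 : ∀ y, e y = s y := fun y => rfl
      simp [h1, h2, hem, hep, hss, hsK']
    have hdet := LinearMap.det_conj (em : V →ₗ[ℂ] V) e
    rw [hconj] at hdet
    rw [LinearEquiv.coe_trans, LinearMap.det_comp, hdet, ← LinearMap.det_comp,
      ← LinearEquiv.coe_trans, LinearEquiv.symm_trans_self, LinearEquiv.refl_toLinearMap,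
      LinearMap.det_id]
  · rw [← hem, ← hep, LinearEquiv.trans_apply, LinearEquiv.symm_apply_apply]

open Filter Topology in
/-- Operators close to the identity move a nondegenerate subspace within its `SU`-orbit. -/
lemma eventually_exists_isometry_map_eq [FiniteDimensional ℂ V] (ω : V →ₗ⋆[ℂ] V →ₗ[ℂ] ℂ)
    (hherm : IsHermitianForm ω) (hnd : IsNondeg ω) (W : Submodule ℂ V)
    (hW : ∀ x ∈ W, (∀ y ∈ W, ω x y = 0) → x = 0) :
    ∀ᶠ F : V →L[ℂ] V in 𝓝 1, ∃ φ : V ≃ₗ[ℂ] V, (∀ x y, ω (φ x) (φ y) = ω x y) ∧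
      LinearMap.det (φ : V →ₗ[ℂ] V) = 1 ∧
      W.map (F : V →ₗ[ℂ] V) = W.map (φ : V →ₗ[ℂ] V) := by
  obtain ⟨adj, hadj⟩ := exists_adjoint ω hherm hnd
  obtain ⟨P, hPW, hP, hPs⟩ := exists_orthogonal_projection ω hherm W hW
  have heq : ∀ a b : V, (∀ y, ω a y = ω b y) → a = b := fun a b h =>
    sub_eq_zero.1 (hnd _ fun y => by simp [h y])
  have hadj' : ∀ X x y, ω x (adj X y) = ω (X x) y := fun X x y => by
    rw [hherm, hadj, ← hherm]
  have hPP : P * P = P := ContinuousLinearMap.ext fun x => hP _ (hPW x)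
  have hPQ : P * (1 - P) = 0 := by rw [mul_sub, mul_one, hPP, sub_self]
  have hadjN : ∀ X, adj (P * X * (1 - P)) = (1 - P) * adj X * P := fun X =>
    ContinuousLinearMap.ext fun x => heq _ _ fun y => by
      simp [hadj, hPs]
  have : FiniteDimensional ℝ (V →L[ℂ] V) := FiniteDimensional.complexToReal _
  let sandwich (a b : V →L[ℂ] V) : (V →L[ℂ] V) →L[ℝ] (V →L[ℂ] V) :=
    (ContinuousLinearMap.mul ℝ _ a).comp ((ContinuousLinearMap.mul ℝ _).flip b)
  let N : (V →L[ℂ] V) →L[ℝ] (V →L[ℂ] V) :=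
    (sandwich P (1 - P)).comp (LinearMap.toContinuousLinearMap adj)
  let K : (V →L[ℂ] V) →L[ℝ] (V →L[ℂ] V) := (2⁻¹ : ℝ) • (sandwich (1 - P) P - N)
  have hNapp : ∀ X, N X = P * adj X * (1 - P) := fun X => (mul_assoc _ _ _).symm
  have hsandwich : ∀ X, sandwich (1 - P) P X = (1 - P) * X * P := fun X => (mul_assoc _ _ _).symm
  have hKapp : ∀ X, K X = (2⁻¹ : ℝ) • ((1 - P) * X * P - P * adj X * (1 - P)) := fun X => by
    rw [← hNapp, ← hsandwich]
    rfl
  have hKx : ∀ X x, K X x = (2⁻¹ : ℂ) • (X (P x) - P (X (P x)) - P (adj X (x - P x))) :=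
    fun X x => by
      rw [hKapp]
      have h : ((2⁻¹ : ℝ) : ℂ) = 2⁻¹ := by norm_num
      rw [← h]
      rfl
  have hPPx : ∀ x, P (P x) = P x := fun x => hP _ (hPW x)
  have hopen := map_nhds_zero_chart K N P (fun X => by
    rw [hKapp, hNapp, ← two_smul ℝ, smul_smul]
    norm_num) (fun X => by
    rw [hNapp, hNapp, hadjN, ← mul_assoc, ← mul_assoc, hPQ]; simp)
  have hunit : ∀ᶠ Y : V →L[ℂ] V in 𝓝 1, IsUnit Y := Units.isOpen.mem_nhds isUnit_one
  have hm : Tendsto (fun X => 1 - K X) (𝓝 0) (𝓝 1) :=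
    Continuous.tendsto' (by fun_prop) _ _ (by simp)
  have hp : Tendsto (fun X => 1 + K X) (𝓝 0) (𝓝 1) :=
    Continuous.tendsto' (by fun_prop) _ _ (by simp)
  have hF := hopen ▸ hunit
  rw [← hopen, eventually_map]
  filter_upwards [hm.eventually hunit, hp.eventually hunit, eventually_map.1 hF]
    with X hXm hXp hXF
  obtain ⟨φ, hφ, hdet, hφK⟩ := exists_cayley_isometry ω (K X) (P + P - 1) (fun x y => by
      have h1 : ∀ x y, ω (P (adj X x)) y = ω x (X (P y)) := fun x y => by rw [hPs, hadj]
      have h2 : ∀ x y, ω x (P (adj X y)) = ω (X (P x)) y := fun x y => by rw [← hPs, hadj']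
      have h3 : ω (P (X (P x))) y = ω (X (P x)) (P y) := hPs _ _
      have h4 : ω x (P (X (P y))) = ω (P x) (X (P y)) := (hPs _ _).symm
      have h5 : (starRingEnd ℂ) 2⁻¹ = 2⁻¹ := by rw [map_inv₀, map_ofNat]
      simp only [hKx, map_smulₛₗ, map_sub, LinearMap.sub_apply, LinearMap.smul_apply,
        h1, h2, h3, h4, h5, smul_eq_mul, RingHom.id_apply]
      ring)
    (by simp only [mul_sub, mul_add, add_mul, sub_mul, hPP]; simp)
    (by
      ext x
      simp [hKx, hPPx]
      module) hXm hXp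
  refine ⟨φ, hφ, hdet, Submodule.eq_of_le_of_finrank_eq ?_ ?_⟩
  · rintro _ ⟨x, hx, rfl⟩
    have hPx := hP x hx
    let z := x + (X x - (X x - P (X x)))
    refine ⟨(1 - K X) ((1 + K X) z), ?_, ?_⟩
    · have : (1 - K X) ((1 + K X) z) = P ((1 - K X) ((1 + K X) z)) := by
        simp [hKx, z, hPx, hPPx]
        module
      rw [this]
      exact hPW _
    · change φ ((1 - K X) ((1 + K X) z)) = _
      rw [hφK]
      simp [hPx, z]
  · obtain ⟨u, hu⟩ := hXF
    rw [← hu, LinearEquiv.finrank_map_eq]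
    exact LinearEquiv.finrank_map_eq (ContinuousLinearEquiv.ofUnit u).toLinearEquiv W

theorem SU_orbit_open_iff_nondegenerate
    [FiniteDimensional ℂ V] (k : ℕ)
    (ω : V →ₗ⋆[ℂ] V →ₗ[ℂ] ℂ) (hherm : IsHermitianForm ω) (hnd : IsNondeg ω)
    (U : Submodule ℂ V) (hU : finrank ℂ U = k) :
    IsOpen {W : {W : Submodule ℂ V // finrank ℂ W = k} |
        ∃ φ : V ≃ₗ[ℂ] V, (∀ x y, ω (φ x) (φ y) = ω x y) ∧
          LinearMap.det (φ : V →ₗ[ℂ] V) = 1 ∧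
          Submodule.map (φ : V →ₗ[ℂ] V) U = W.1} ↔
      (∀ x ∈ U, (∀ y ∈ U, ω x y = 0) → x = 0) := by
  rw [isOpen_coinduced]
  constructor
  · intro hopen x hx hrad
    obtain ⟨O, hO, hOeq⟩ := isOpen_induced_iff.1 hopen
    let e : (Fin k → ℂ) ≃ₗ[ℂ] U := LinearEquiv.ofFinrankEq _ _ (by simp [hU])
    let f : (Fin k → ℂ) →L[ℂ] V := LinearMap.toContinuousLinearMap (U.subtype ∘ₗ e)
    have hf : Function.Injective f := Subtype.val_injective.comp e.injective
    have hfU : LinearMap.range (f : (Fin k → ℂ) →ₗ[ℂ] V) = U := by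
      ext y
      exact ⟨fun ⟨c, hc⟩ => hc ▸ (e c).2, fun hy => ⟨e.symm ⟨y, hy⟩, by simp [f]⟩⟩
    have hfO : f ∈ O := by
      have : (⟨f, hf⟩ : {f : (Fin k → ℂ) →L[ℂ] V // Function.Injective f}) ∈
          Subtype.val ⁻¹' O := by
        rw [hOeq]
        exact ⟨LinearEquiv.refl ℂ V, fun _ _ => rfl, by simp, by simp [hfU]⟩
      exact this
    obtain ⟨v, hv⟩ := exists_gramMatrix_det_ne_zero ω hherm hnd (hU ▸ U.finrank_le)
    let g : (Fin k → ℂ) →L[ℂ] V := LinearMap.toContinuousLinearMap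
      ((Pi.basisFun ℂ (Fin k)).constr ℂ v)
    have hg : ∀ i, g (Pi.single i 1) = v i := fun i => by
      simp [g]
    have hcont : Filter.Tendsto (fun s : ℝ => f + (s : ℂ) • (g - f)) (nhds 0) (nhds f) :=
      Continuous.tendsto' (by fun_prop) _ _ (by simp)
    obtain ⟨s, hs, hsO⟩ := ((frequently_gramMatrix_det_ne_zero ω
      (fun i => f (Pi.single i 1)) v hv).and_eventually
        (hcont.eventually (hO.mem_nhds hfO))).exists
    have hzero := eq_zero_of_gramMatrix_det_ne_zero ω hherm
      ((f + (s : ℂ) • (g - f) : (Fin k → ℂ) →L[ℂ] V) : (Fin k → ℂ) →ₗ[ℂ] V) (by simpa [hg] using hs)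
    set h := f + (s : ℂ) • (g - f)
    have hinj : Function.Injective h := (injective_iff_map_eq_zero h).2 fun c hc =>
      hzero c fun d => by simp [hc]
    have hmem : (⟨h, hinj⟩ : {f : (Fin k → ℂ) →L[ℂ] V // Function.Injective f}) ∈
        Subtype.val ⁻¹' O := hsO
    rw [hOeq] at hmem
    obtain ⟨φ, hφ, -, hmap⟩ := hmem
    change U.map (φ : V →ₗ[ℂ] V) = LinearMap.range (h : (Fin k → ℂ) →ₗ[ℂ] V) at hmap
    obtain ⟨c, hc⟩ : φ x ∈ LinearMap.range (h : (Fin k → ℂ) →ₗ[ℂ] V) :=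
      hmap ▸ Submodule.mem_map_of_mem hx
    have hc0 : c = 0 := hzero c fun d => by
      obtain ⟨y, hy, hyd⟩ : (h : (Fin k → ℂ) →ₗ[ℂ] V) d ∈ U.map (φ : V →ₗ[ℂ] V) :=
        hmap ▸ ⟨d, rfl⟩
      rw [hc, ← hyd]
      exact (hφ x y).trans (hrad y hy)
    rw [hc0, map_zero] at hc
    exact φ.map_eq_zero_iff.1 hc.symm
  · intro hU0
    rw [isOpen_iff_mem_nhds]
    rintro ⟨f₀, hf₀⟩ ⟨φ₀, hφ₀, hdet₀, hmap₀⟩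
    change U.map (φ₀ : V →ₗ[ℂ] V) = LinearMap.range (f₀ : (Fin k → ℂ) →ₗ[ℂ] V) at hmap₀
    set W := LinearMap.range (f₀ : (Fin k → ℂ) →ₗ[ℂ] V) with hWdef
    have hW : ∀ x ∈ W, (∀ y ∈ W, ω x y = 0) → x = 0 := by
      rw [← hmap₀]
      rintro _ ⟨x, hx, rfl⟩ hrad
      have := hU0 x hx fun y hy => by
        rw [← hφ₀]
        exact hrad _ (Submodule.mem_map_of_mem hy)
      simp [this]
    obtain ⟨L₀, hL₀⟩ := LinearMap.exists_leftInverse_of_injective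
      (f₀ : (Fin k → ℂ) →ₗ[ℂ] V) (LinearMap.ker_eq_bot.2 hf₀)
    let L : V →L[ℂ] (Fin k → ℂ) := LinearMap.toContinuousLinearMap L₀
    have hL : ∀ c, L (f₀ c) = c := fun c => LinearMap.congr_fun hL₀ c
    have htend : Filter.Tendsto
        (fun f : {f : (Fin k → ℂ) →L[ℂ] V // Function.Injective f} => 1 + (f.1 - f₀).comp L)
        (nhds ⟨f₀, hf₀⟩) (nhds 1) :=
      Continuous.tendsto' (by fun_prop) _ _ (by simp)
    filter_upwards [htend.eventually (eventually_exists_isometry_map_eq ω hherm hnd W hW)]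
      with f hf
    obtain ⟨φ, hφ, hdet, hmap⟩ := hf
    refine ⟨φ₀.trans φ, fun x y => (hφ _ _).trans (hφ₀ _ _), ?_, ?_⟩
    · rw [LinearEquiv.coe_trans, LinearMap.det_comp, hdet, hdet₀, one_mul]
    · change _ = LinearMap.range (f.1 : (Fin k → ℂ) →ₗ[ℂ] V)
      rw [LinearEquiv.coe_trans, Submodule.map_comp, hmap₀, ← hmap, hWdef, ← LinearMap.range_comp]
      congr 1
      ext c
      simp [hL]
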